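/- Let (t : H →* G, α : G →* MulAut H) be a crossed module, with mapping-cone maps d₁, d₂ and Peiffer lifting {·,·} as specified. Then the second 2-crossed-module axiom holds: for all l, l' ∈ H, {d₂ l, d₂ l'} = l * l' * l⁻¹ * l'⁻¹ (the commutator [l, l']). -/

import Mathlib

section MappingCone

open scoped commutatorElement

variable {G H : Type*} [Group G] [Group H] {α : G →* MulAut H}

/-- The boundary map `d₂` of the mapping cone of the identity on a crossed module with boundary
`t`, as a plain function. It is multiplicative exactly when `t` is and `α (t h) = MulAut.conj h`
for all `h`. -/
def mappingConeBoundary (α : G →* MulAut H) (t : H → G) (h : H) : H ⋊[α] G :=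
  ⟨h⁻¹, t h⟩

/-- The Peiffer lifting `{x, y}` on the mapping cone of the identity on a crossed module with
action `α`. -/
def peifferLifting (x y : H ⋊[α] G) : H :=
  α (x.right * y.right * x.right⁻¹) x.left * x.left⁻¹

theorem peifferLifting_eq_commutatorElement {x y : H ⋊[α] G} {k l : H}
    (hx : α x.right = MulAut.conj k) (hy : α y.right = MulAut.conj l) :
    peifferLifting x y = ⁅k * l * k⁻¹, x.left⁆ := by
  have action_eq_conj : α (x.right * y.right * x.right⁻¹) = MulAut.conj (k * l * k⁻¹) := by
    simp only [map_mul, map_inv, hx, hy]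
  rw [peifferLifting, action_eq_conj, MulAut.conj_apply, commutatorElement_def]

theorem commutatorElement_conj_inv (k l : H) : ⁅k * l * k⁻¹, k⁻¹⁆ = ⁅k, l⁆ := by
  simp only [commutatorElement_def]
  group

theorem mappingCone_peiffer_axiom2_general {t : H → G} (ht : ∀ h, α (t h) = MulAut.conj h)
    (l l' : H) :
    peifferLifting (mappingConeBoundary α t l) (mappingConeBoundary α t l') = ⁅l, l'⁆ :=
  (peifferLifting_eq_commutatorElement (ht l) (ht l')).trans (commutatorElement_conj_inv l l')

end MappingCone

/-- Second 2-crossed-module axiom for the mapping cone of the identity on a crossed module: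
`{d₂ l, d₂ l'} = [l, l']`. -/
theorem mappingCone_peiffer_axiom2 {G H : Type*} [Group G] [Group H]
    (t : H →* G) (α : G →* MulAut H)
    (hcm1 : ∀ (g : G) (h : H), t (α g h) = g * t h * g⁻¹)
    (hcm2 : ∀ h h' : H, α (t h) h' = h * h' * h⁻¹)
    (d₂ : H →* H ⋊[α] G) (hd₂ : ∀ h : H, d₂ h = ⟨h⁻¹, t h⟩)
    (P : H ⋊[α] G → H ⋊[α] G → H)
    (hP : ∀ (h₁ : H) (g₁ : G) (h₂ : H) (g₂ : G),
      P ⟨h₁, g₁⟩ ⟨h₂, g₂⟩ = α (g₁ * g₂ * g₁⁻¹) h₁ * h₁⁻¹) :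
    ∀ l l' : H, P (d₂ l) (d₂ l') = l * l' * l⁻¹ * l'⁻¹ := by
  intro l l'
  rw [hd₂, hd₂, hP]
  exact mappingCone_peiffer_axiom2_general (fun h ↦ MulEquiv.ext (hcm2 h)) l l'
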